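/- arXiv:2204.10991 — 2 statements merged into one kernel-verified Lean document; each statement's English description precedes it below -/
import Mathlib

section
/- Let 𝒜 be an L-structure and ℬ an L'-structure on the same underlying set, both locally finite, such that each of L and L' contains a binary relation symbol interpreted in the respective structure as a linear order of the domain. Suppose: (i) 𝒜 is a quantifier-free reduct of ℬ, i.e. for all same-length finite tuples ī, j̄, ī ∼_ℬ j̄ implies ī ∼_𝒜 j̄; (ii) ℬ is saturated: for every subset S of ℬ of cardinality strictly less than the cardinality of ℬ and every set p of L'-formulas in one free variable with parameters from S, if every finite subset of p is realized in ℬ then p is realized in ℬ; (iii) every quantifier-free type realized in ℬ is equivalent in ℬ to a single L'-formula, i.e. for every finite tuple b̄ from ℬ there is an L'-formula φ(x̄) such that for every tuple c̄ of the same length, ℬ ⊨ φ(c̄) if and only if c̄ ∼_ℬ b̄; (iv) ℬ has the Ramsey property (every pair of finite substructures of ℬ is a Ramsey duo for ℬ). Then 𝒜 is a semi-retract of ℬ if and only if 𝒜 has the Ramsey property (every pair of finite substructures of 𝒜 is a Ramsey duo for 𝒜). -/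
open FirstOrder FirstOrder.Language

/-- Two same-length tuples have the same quantifier-free type over ∅. -/
def SameQfType (L : FirstOrder.Language) (M : Type*) [L.Structure M] {n : ℕ}
    (x y : Fin n → M) : Prop :=
  ∀ φ : L.Formula (Fin n), φ.IsQF → (φ.Realize x ↔ φ.Realize y)

/-- A qftp-respecting injection between structures in possibly different languages. -/
def QftpRespecting (L L' : FirstOrder.Language) (M N : Type*) [L.Structure M] [L'.Structure N]
    (h : M → N) : Prop :=
  Function.Injective h ∧
    ∀ (n : ℕ) (x y : Fin n → M), SameQfType L M x y → SameQfType L' N (h ∘ x) (h ∘ y)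

/-- `(g, f)` is a semi-retraction between `M` and `N`: both maps are qftp-respecting
injections and `f ∘ g` is qftp-preserving (equivalently, an `L`-embedding of `M` into `M`). -/
def IsSemiRetraction (L L' : FirstOrder.Language) (M N : Type*)
    [L.Structure M] [L'.Structure N] (g : M → N) (f : N → M) : Prop :=
  QftpRespecting L L' M N g ∧ QftpRespecting L' L N M f ∧
    ∀ (n : ℕ) (x : Fin n → M), SameQfType L M x (f ∘ g ∘ x)

/-- `M` is locally finite: every finitely generated substructure is finite. -/
def StructLocallyFinite (L : FirstOrder.Language) (M : Type*) [L.Structure M] : Prop :=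
  ∀ S : L.Substructure M, S.FG → (S : Set M).Finite

/-- `M → (B)^A_{r,d}` for substructures. -/
def ArrowSub (L : FirstOrder.Language) (M : Type*) [L.Structure M]
    (A B : L.Substructure M) (r d : ℕ) : Prop :=
  ∀ c : L.Substructure M → Fin r, ∃ B' : L.Substructure M,
    Nonempty (B' ≃[L] B) ∧
      (c '' {A' : L.Substructure M | A' ≤ B' ∧ Nonempty (A' ≃[L] A)}).ncard ≤ d

/-- `M →ᵉ (B)^A_{r,d}` for embeddings. -/
def ArrowEmb (L : FirstOrder.Language) (M : Type*) [L.Structure M]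
    (A B : L.Substructure M) (r d : ℕ) : Prop :=
  ∀ c : (A ↪[L] M) → Fin r, ∃ h : B ↪[L] M,
    (c '' {j : A ↪[L] M | ∃ e : A ↪[L] B, j = h.comp e}).ncard ≤ d

/-- A structure is rigid if its only automorphism is the identity. -/
def IsRigidStructure (L : FirstOrder.Language) (M : Type*) [L.Structure M] : Prop :=
  ∀ σ : M ≃[L] M, ∀ x : M, σ x = x


section TupleRamsey

variable {L : FirstOrder.Language} {M : Type*} [L.Structure M]

namespace SameQfType

theorem refl {n : ℕ} (x : Fin n → M) : SameQfType L M x x := fun _ _ => Iff.rfl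

theorem symm {n : ℕ} {x y : Fin n → M} (h : SameQfType L M x y) : SameQfType L M y x :=
  fun φ hφ => (h φ hφ).symm

theorem trans {n : ℕ} {x y z : Fin n → M} (h : SameQfType L M x y) (h' : SameQfType L M y z) :
    SameQfType L M x z :=
  fun φ hφ => (h φ hφ).trans (h' φ hφ)

theorem realize_term_eq_iff {n : ℕ} {x y : Fin n → M} (h : SameQfType L M x y)
    (t₁ t₂ : L.Term (Fin n)) :
    t₁.realize x = t₂.realize x ↔ t₁.realize y = t₂.realize y := by
  simpa using h (t₁.equal t₂) (BoundedFormula.IsAtomic.equal _ _).isQF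

theorem relMap_iff {n k : ℕ} {x y : Fin n → M} (h : SameQfType L M x y)
    (R : L.Relations k) (t : Fin k → L.Term (Fin n)) :
    Structure.RelMap R (fun i => (t i).realize x) ↔
      Structure.RelMap R (fun i => (t i).realize y) := by
  simpa using h (R.formula t) (BoundedFormula.IsAtomic.rel _ _).isQF

theorem of_embeddings {N : Type*} [L.Structure N] (e e' : N ↪[L] M) {n : ℕ} (x : Fin n → N) :
    SameQfType L M (e ∘ x) (e' ∘ x) := by
  intro φ hφ
  have h : ∀ e : N ↪[L] M, φ.Realize (e ∘ x) ↔ φ.Realize x := by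
    intro e
    rw [Formula.Realize, Formula.Realize, ← hφ.realize_embedding e]
    exact iff_of_eq (congrArg _ (Subsingleton.elim _ _))
  rw [h e, h e']

theorem exists_embedding_closure {n : ℕ} {x y : Fin n → M} (h : SameQfType L M x y) :
    ∃ e : Substructure.closure L (Set.range x) ↪[L] M,
      ∀ i, e ⟨x i, Substructure.subset_closure (Set.mem_range_self i)⟩ = y i := by
  have hterm : ∀ m : Substructure.closure L (Set.range x),
      ∃ t : L.Term (Fin n), t.realize x = m := by
    rintro ⟨m, hm⟩
    obtain ⟨t, rfl⟩ := Substructure.mem_closure_iff_exists_term.1 hm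
    choose k hk using fun s : Set.range x => s.2
    refine ⟨t.relabel k, ?_⟩
    rw [Term.realize_relabel]
    exact congrArg (fun v => t.realize v) (funext hk)
  choose T hT using hterm
  have hT' : ∀ (t : L.Term (Fin n)) (m : Substructure.closure L (Set.range x)),
      t.realize x = m → (T m).realize y = t.realize y := fun t m ht =>
    (h.realize_term_eq_iff _ _).1 ((hT m).trans ht.symm)
  refine ⟨⟨⟨fun m => (T m).realize y, ?_⟩, ?_, ?_⟩, fun i => ?_⟩
  · intro m m' hm
    apply Subtype.ext
    rw [← hT m, ← hT m']
    exact (h.realize_term_eq_iff _ _).2 hm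
  · intro k f z
    refine hT' (Term.func f fun i => T (z i)) _ ?_
    simp only [Term.realize_func, hT]
    rfl
  · intro k R z
    refine (h.relMap_iff R fun i => T (z i)).symm.trans ?_
    simp only [hT]
    rfl
  · exact hT' (Term.var i) _ rfl

end SameQfType

/-- The map `h` preserves the quantifier-free types of finite tuples from `B`. -/
def QfPreservingOn (L : FirstOrder.Language) {M : Type*} [L.Structure M] (B : Set M)
    (h : M → M) : Prop :=
  ∀ (n : ℕ) (x : Fin n → M), (∀ i, x i ∈ B) → SameQfType L M x (h ∘ x)

theorem QfPreservingOn.comp {B C : Set M} {h g : M → M} (hg : QfPreservingOn L C g)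
    (hh : QfPreservingOn L B h) (hBC : Set.MapsTo h B C) : QfPreservingOn L B (g ∘ h) :=
  fun n x hx => (hh n x hx).trans (hg n (h ∘ x) fun i => hBC (hx i))

theorem QfPreservingOn.exists_embedding {S : L.Substructure M} {h : M → M}
    (hh : QfPreservingOn L (S : Set M) h) : ∃ e : S ↪[L] M, ∀ m : S, e m = h m := by
  refine ⟨⟨⟨fun m => h m, ?_⟩, ?_, ?_⟩, fun _ => rfl⟩
  · intro m m' hm
    apply Subtype.ext
    have := (hh 2 ![m, m'] (by simp [Fin.forall_fin_two])).realize_term_eq_iff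
      (Term.var 0) (Term.var 1)
    simpa using this.2 (by simpa using hm)
  · intro k f z
    have := (hh (k + 1) (Fin.cons (Structure.funMap f z : S) fun i => (z i : M))
      (by simp [Fin.forall_fin_succ])).realize_term_eq_iff
        (Term.var 0) (Term.func f fun i => Term.var i.succ)
    exact this.1 rfl
  · intro k R z
    exact ((hh k (fun i => (z i : M)) (fun i => (z i).2)).relMap_iff R fun i => Term.var i).symm

/-- The Ramsey property for colorings of realizations of a quantifier-free type. -/
def TupleRamsey (L : FirstOrder.Language) (M : Type*) [L.Structure M] : Prop :=
  ∀ (n : ℕ) (a : Fin n → M) (B : Set M), B.Finite → ∀ r : ℕ, 2 ≤ r →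
    ∀ c : (Fin n → M) → Fin r, ∃ h : M → M, QfPreservingOn L B h ∧
      ∀ x y : Fin n → M, (∀ i, x i ∈ B) → (∀ i, y i ∈ B) →
        SameQfType L M x a → SameQfType L M y a → c (h ∘ x) = c (h ∘ y)

/-- Finite substructures of a linearly ordered structure are rigid. -/
theorem equiv_apply_eq_of_isLinearOrder {R : L.Relations 2}
    (hR : IsLinearOrder M fun x y => Structure.RelMap R ![x, y]) {A A' : L.Substructure M}
    (hA : (A : Set M).Finite) (e e' : A ≃[L] A') (x : A) : e x = e' x := by
  classical
  let : LinearOrder M :=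
    { le := fun x y => Structure.RelMap R ![x, y]
      le_refl := hR.refl
      le_trans := hR.trans
      le_antisymm := hR.antisymm
      le_total := hR.total
      toDecidableLE := Classical.decRel _ }
  have : Finite A := hA
  have hord : ∀ (e : A ≃[L] A') {x y : A}, e x ≤ e y ↔ x ≤ y := by
    intro e x y
    have h := e.map_rel R ![x, y]
    have h₁ : Structure.RelMap R (e ∘ ![x, y]) ↔ e x ≤ e y := by
      rw [← A'.subtype.map_rel]
      exact iff_of_eq (congrArg _ (by ext i; fin_cases i <;> rfl))
    have h₂ : Structure.RelMap R ![x, y] ↔ x ≤ y := by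
      rw [← A.subtype.map_rel]
      exact iff_of_eq (congrArg _ (by ext i; fin_cases i <;> rfl))
    exact h₁.symm.trans (h.trans h₂)
  have : (⟨e.toEquiv, hord e⟩ : A ≃o A') = ⟨e'.toEquiv, hord e'⟩ := Subsingleton.elim _ _
  exact DFunLike.congr_fun this x

theorem tupleRamsey_of_arrowSub (hlf : StructLocallyFinite L M)
    (hord : ∃ R : L.Relations 2, IsLinearOrder M fun x y => Structure.RelMap R ![x, y])
    (hRP : ∀ A B : L.Substructure M, (A : Set M).Finite → (B : Set M).Finite →
      ∀ r : ℕ, 2 ≤ r → ArrowSub L M A B r 1) : TupleRamsey L M := by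
  classical
  obtain ⟨R, hR⟩ := hord
  intro n a B hB r hr c
  have hA₀ := hlf _ (Substructure.fg_closure (L := L) (Set.finite_range a))
  have hB₀ := hlf _ (Substructure.fg_closure (L := L) hB)
  set A₀ := Substructure.closure L (Set.range a)
  set B₀ := Substructure.closure L B
  let a' : Fin n → A₀ := fun i => ⟨a i, Substructure.subset_closure (Set.mem_range_self i)⟩
  let c' : L.Substructure M → Fin r := fun A' =>
    if h : Nonempty (A₀ ≃[L] A') then c (fun i => (h.some (a' i) : M)) else ⟨0, by omega⟩
  have hc' : ∀ (A' : L.Substructure M) (e : A₀ ≃[L] A'), c' A' = c (fun i => (e (a' i) : M)) := by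
    intro A' e
    have h : Nonempty (A₀ ≃[L] A') := ⟨e⟩
    simp only [c', dif_pos h]
    exact congrArg c (funext fun i =>
      congrArg _ (equiv_apply_eq_of_isLinearOrder hR hA₀ h.some e (a' i)))
  obtain ⟨B', ⟨e⟩, hcard⟩ := hRP A₀ B₀ hA₀ hB₀ r hr c'
  let h : M → M := fun m => if hm : m ∈ B₀ then (e.symm ⟨m, hm⟩ : M) else m
  have hhB : ∀ m (hm : m ∈ B₀), h m = e.symm ⟨m, hm⟩ := fun m hm => dif_pos hm
  have hBB : ∀ m ∈ B, m ∈ B₀ := fun m hm => Substructure.subset_closure hm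
  have hpres : QfPreservingOn L B h := by
    intro k x hx
    have := SameQfType.of_embeddings B₀.subtype (B'.subtype.comp e.symm.toEmbedding)
      fun i => ⟨x i, hBB _ (hx i)⟩
    rwa [show h ∘ x = (B'.subtype.comp e.symm.toEmbedding) ∘ fun i => ⟨x i, hBB _ (hx i)⟩ from
      funext fun i => hhB _ (hBB _ (hx i))]
  refine ⟨h, hpres, ?_⟩
  have key : ∀ x : Fin n → M, (∀ i, x i ∈ B) → SameQfType L M x a →
      c (h ∘ x) ∈ c' '' {A' : L.Substructure M | A' ≤ B' ∧ Nonempty (A' ≃[L] A₀)} := by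
    intro x hx hxa
    obtain ⟨j, hj⟩ := (hxa.symm.trans (hpres n x hx)).exists_embedding_closure
    refine ⟨j.toHom.range, ⟨?_, ⟨j.equivRange.symm⟩⟩, ?_⟩
    · rintro _ ⟨⟨m, hm⟩, rfl⟩
      suffices A₀ ≤ (B'.comap j.toHom).map A₀.subtype.toHom by
        obtain ⟨m', hm', hmm⟩ := this hm
        have : m' = ⟨m, hm⟩ := Subtype.ext hmm
        exact this ▸ hm'
      refine Substructure.closure_le.2 ?_
      rintro _ ⟨i, rfl⟩
      refine ⟨a' i, ?_, rfl⟩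
      change j (a' i) ∈ B'
      rw [hj i, Function.comp_apply, hhB _ (hBB _ (hx i))]
      exact Subtype.coe_prop _
    · rw [hc' _ j.equivRange]
      exact congrArg c (funext hj)
  have hsub := (Set.ncard_le_one (Set.toFinite _)).1 hcard
  exact fun x y hx hy hxa hya => hsub _ (key x hx hxa) _ (key y hy hya)

theorem arrowSub_of_tupleRamsey (hRP : TupleRamsey L M) (A B : L.Substructure M)
    (hA : (A : Set M).Finite) (hB : (B : Set M).Finite) (r : ℕ) (hr : 2 ≤ r) :
    ArrowSub L M A B r 1 := by
  intro c
  have : Finite A := hA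
  obtain ⟨n, ⟨E⟩⟩ := Finite.exists_equiv_fin A
  obtain ⟨h, hpres, hh⟩ := hRP n (fun i => E.symm i) B hB r hr
    fun x => c (Substructure.closure L (Set.range x))
  obtain ⟨j, hj⟩ := hpres.exists_embedding
  refine ⟨j.toHom.range, ⟨j.equivRange.symm⟩, ?_⟩
  have key : ∀ A' : L.Substructure M, A' ≤ j.toHom.range → Nonempty (A' ≃[L] A) →
      ∃ x : Fin n → M, (∀ i, x i ∈ B) ∧ SameQfType L M x (fun i => E.symm i) ∧
        Set.range (h ∘ x) = A' := by
    rintro A' hA' ⟨e⟩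
    let ε : A ↪[L] M := B.subtype.comp (j.equivRange.symm.toEmbedding.comp
      ((Substructure.inclusion hA').comp e.symm.toEmbedding))
    have hε : ∀ m : A, h (ε m) = e.symm m := by
      intro m
      change h ((j.equivRange.symm (Substructure.inclusion hA' (e.symm m)) : B) : M) = _
      rw [← hj, ← j.equivRange_apply, Language.Equiv.apply_symm_apply]
      rfl
    refine ⟨fun i => ε (E.symm i), fun i => Subtype.coe_prop _,
      SameQfType.of_embeddings ε A.subtype E.symm, ?_⟩
    ext m
    constructor
    · rintro ⟨i, rfl⟩
      simp [hε]
    · intro hm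
      exact ⟨E (e ⟨m, hm⟩), by simp [hε]⟩
  rw [Set.ncard_le_one (Set.toFinite _)]
  rintro _ ⟨A₁, ⟨h₁, e₁⟩, rfl⟩ _ ⟨A₂, ⟨h₂, e₂⟩, rfl⟩
  obtain ⟨x, hx, hxa, hx'⟩ := key A₁ h₁ e₁
  obtain ⟨y, hy, hya, hy'⟩ := key A₂ h₂ e₂
  simpa [hx', hy'] using hh x y hx hy hxa hya

end TupleRamsey

section Saturation

variable {L : FirstOrder.Language} {M : Type*} [L.Structure M]

theorem exists_finset_realize_congr {γ : Type*} (φ : L.Formula γ) :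
    ∃ F : Finset γ, ∀ v w : γ → M, (∀ k ∈ F, v k = w k) → (φ.Realize v ↔ φ.Realize w) := by
  classical
  refine ⟨φ.freeVarFinset, fun v w hvw => ?_⟩
  have hv : ∀ u : γ → M, Formula.Realize (φ.restrictFreeVar id) (fun k => u k.1) ↔ φ.Realize u :=
    fun u => BoundedFormula.realize_restrictFreeVar u fun _ => rfl
  rw [← hv v, ← hv w]
  exact iff_of_eq (congrArg _ (funext fun k => hvw k k.2))

/-- Every finitely satisfiable set of formulas in one variable over fewer than `#M` parameters
is realized. -/
def IsSaturatedStructure (L : FirstOrder.Language) (M : Type*) [L.Structure M] : Prop :=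
  ∀ S : Set M, Cardinal.mk S < Cardinal.mk M →
    ∀ p : Set (L.Formula (S ⊕ Fin 1)),
      (∀ p₀ : Finset (L.Formula (S ⊕ Fin 1)), ↑p₀ ⊆ p →
        ∃ b : M, ∀ φ ∈ p₀, Formula.Realize φ (Sum.elim (fun s => (s : M)) fun _ => b)) →
      ∃ b : M, ∀ φ ∈ p, Formula.Realize φ (Sum.elim (fun s => (s : M)) fun _ => b)

/-- Given valuations `V s` and an ultrafilter `U`, the value `b` at `i` together with the values
`w` below `i` satisfies every formula that the valuations satisfy `U`-almost everywhere. -/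
def RealizesLimitAt {J I : Type*} [LinearOrder I] (L : FirstOrder.Language) {M : Type*}
    [L.Structure M] (U : Ultrafilter J) (V : J → I → M) (i : I) (w : Set.Iio i → M) (b : M) :
    Prop :=
  ∀ φ : L.Formula (Set.Iio i ⊕ Fin 1),
    (∀ᶠ s in U, φ.Realize (Sum.elim (fun k => V s k) fun _ => V s i)) →
      φ.Realize (Sum.elim w fun _ => b)

theorem realize_of_realizesLimitAt {J I γ : Type*} [LinearOrder I] {U : Ultrafilter J}
    {V : J → I → M} {v : I → M} (a : γ → I)
    (hv : ∀ k, RealizesLimitAt L U V (a k) (fun j => v j) (v (a k)))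
    {φ : L.Formula γ} (hφ : ∀ᶠ s in U, φ.Realize (V s ∘ a)) : φ.Realize (v ∘ a) := by
  classical
  obtain ⟨F, hF⟩ := exists_finset_realize_congr (M := M) φ
  obtain rfl | hne := F.eq_empty_or_nonempty
  · obtain ⟨s, hs⟩ := hφ.exists
    exact (hF _ _ (by simp)).1 hs
  obtain ⟨m, hm, hmax⟩ := F.exists_max_image a hne
  let ρ : γ → Set.Iio (a m) ⊕ Fin 1 := fun k =>
    if h : a k < a m then Sum.inl ⟨a k, h⟩ else Sum.inr 0
  have hρ : ∀ u : I → M, (φ.relabel ρ).Realize (Sum.elim (fun k => u k) fun _ => u (a m)) ↔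
      φ.Realize (u ∘ a) := by
    intro u
    rw [Formula.realize_relabel]
    refine hF _ _ fun k hk => ?_
    by_cases h : a k < a m
    · simp [ρ, h]
    · simp [ρ, (hmax k hk).antisymm (not_lt.1 h)]
  exact (hρ v).1 (hv m (φ.relabel ρ) (hφ.mono fun s hs => (hρ (V s)).2 hs))

theorem IsSaturatedStructure.exists_realizesLimitAt (hsat : IsSaturatedStructure L M)
    {J I : Type*} [LinearOrder I] {U : Ultrafilter J} {V : J → I → M} (i : I) (w : Set.Iio i → M)
    (hcard : Cardinal.mk (Set.range w) < Cardinal.mk M)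
    (hw : ∀ φ : L.Formula (Set.Iio i), (∀ᶠ s in U, φ.Realize fun k => V s k) → φ.Realize w) :
    ∃ b, RealizesLimitAt L U V i w b := by
  classical
  let τ : Set.Iio i ⊕ Fin 1 → Set.range w ⊕ Fin 1 := Sum.map (Set.rangeFactorization w) id
  have hτ : ∀ (φ : L.Formula (Set.Iio i ⊕ Fin 1)) (b : M),
      (φ.relabel τ).Realize (Sum.elim (fun s => (s : M)) fun _ => b) ↔
        φ.Realize (Sum.elim w fun _ => b) := by
    intro φ b
    rw [Formula.realize_relabel]
    refine iff_of_eq (congrArg _ ?_)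
    ext (k | k) <;> rfl
  obtain ⟨b, hb⟩ := hsat (Set.range w) hcard
    ((fun φ => φ.relabel τ) '' {φ : L.Formula (Set.Iio i ⊕ Fin 1) |
      ∀ᶠ s in U, φ.Realize (Sum.elim (fun k => V s k) fun _ => V s i)}) (by
    intro p₀ hp₀
    obtain ⟨q, hq, rfl⟩ := Finset.subset_set_image_iff.1 hp₀
    let ψ : L.Formula (Set.Iio i ⊕ Fin 1) := Formula.iInf fun φ : q => φ.1
    have hψ : ∀ u, ψ.Realize (M := M) u ↔ ∀ φ ∈ q, φ.Realize u := by simp [ψ]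
    have := hw (ψ.iExs (Fin 1)) (by
      have : ∀ᶠ s in U, ∀ φ ∈ q, φ.Realize (Sum.elim (fun k => V s k) fun _ => V s i) :=
        (Filter.eventually_all_finset q).2 hq
      filter_upwards [this] with s hs
      exact Formula.realize_iExs.2 ⟨fun _ => V s i, (hψ _).2 hs⟩)
    obtain ⟨b, hb⟩ := Formula.realize_iExs.1 this
    refine ⟨b 0, ?_⟩
    simp only [Finset.mem_image, forall_exists_index, and_imp, forall_apply_eq_imp_iff₂, hτ]
    rwa [hψ, show b = fun _ => b 0 from funext fun k => congrArg b (Subsingleton.elim _ _)] at hb)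
  exact ⟨b, fun φ hφ => (hτ φ b).1 (hb _ ⟨φ, hφ, rfl⟩)⟩

/-- A saturated structure realizes every finitely satisfiable type in `#M` many variables. -/
theorem IsSaturatedStructure.exists_realize (hsat : IsSaturatedStructure L M)
    (Γ : Set (L.Formula M))
    (hΓ : ∀ Γ₀ : Finset (L.Formula M), ↑Γ₀ ⊆ Γ → ∃ v : M → M, ∀ φ ∈ Γ₀, φ.Realize v) :
    ∃ v : M → M, ∀ φ ∈ Γ, φ.Realize v := by
  classical
  have hfin : ∀ s : Finset Γ, ∃ v : M → M, ∀ φ ∈ s, φ.1.Realize v := by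
    intro s
    obtain ⟨v, hv⟩ := hΓ (s.map (Function.Embedding.subtype _)) (by
      intro φ hφ
      obtain ⟨ψ, -, rfl⟩ := Finset.mem_map.1 hφ
      exact ψ.2)
    exact ⟨v, fun φ hφ => hv _ (Finset.mem_map_of_mem _ hφ)⟩
  choose V hV using hfin
  let U : Ultrafilter (Finset Γ) := Ultrafilter.of Filter.atTop
  obtain ⟨_, _, hord⟩ := Cardinal.exists_ord_eq_type_lt M
  have hcard : ∀ i : M, Cardinal.mk (Set.Iio i) < Cardinal.mk M := fun i =>
    Cardinal.mk_Iio_lt i hord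
  let step : ∀ i : M, (∀ j, j < i → M) → M := fun i w =>
    if h : ∃ b, RealizesLimitAt L U V i (fun k => w k k.2) b then h.choose else i
  let v : M → M := WellFounded.fix (wellFounded_lt (α := M)) step
  have hv : ∀ i, RealizesLimitAt L U V i (fun j => v j) (v i) := by
    intro i
    induction i using WellFoundedLT.induction with
    | ind i ih =>
      have h : ∃ b, RealizesLimitAt L U V i (fun k => v k) b :=
        hsat.exists_realizesLimitAt i _ (Cardinal.mk_range_le.trans_lt (hcard i)) fun φ hφ =>
          realize_of_realizesLimitAt (fun k : Set.Iio i => (k : M)) (fun k => ih k k.2) hφ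
      have hvi : v i = h.choose := by
        rw [show v i = step i fun j _ => v j from WellFounded.fix_eq _ _ _]
        exact dif_pos h
      rw [hvi]
      exact h.choose_spec
  refine ⟨v, fun φ hφ => realize_of_realizesLimitAt id hv ?_⟩
  have : ∀ᶠ s : Finset Γ in Filter.atTop, φ.Realize (V s) :=
    (Filter.eventually_ge_atTop {⟨φ, hφ⟩}).mono fun s hs =>
      hV s ⟨φ, hφ⟩ (hs (Finset.mem_singleton_self _))
  exact this.filter_mono (Ultrafilter.of_le _)

end Saturation

section QfReduct

variable {L L' : FirstOrder.Language} {M : Type*} [L.Structure M] [L'.Structure M]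

theorem TupleRamsey.of_isSemiRetraction {g f : M → M} (hgf : IsSemiRetraction L L' M M g f)
    (hRP : TupleRamsey L' M) : TupleRamsey L M := by
  obtain ⟨⟨-, hg⟩, ⟨-, hf⟩, hfg⟩ := hgf
  intro n a B hB r hr c
  obtain ⟨h, hpres, hhom⟩ := hRP n (g ∘ a) (g '' B) (hB.image g) r hr fun y => c (f ∘ y)
  have himage : ∀ {k : ℕ} {x : Fin k → M}, (∀ i, x i ∈ B) → ∀ i, (g ∘ x) i ∈ g '' B :=
    fun hx i => Set.mem_image_of_mem g (hx i)
  refine ⟨f ∘ h ∘ g, fun k x hx => ?_, fun x y hx hy hxa hya => ?_⟩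
  · exact (hfg k x).trans (hf k _ _ (hpres k (g ∘ x) (himage hx)))
  · exact hhom _ _ (himage hx) (himage hy) (hg n _ _ hxa) (hg n _ _ hya)

/-- The map `g` preserves quantifier-free `L`-types on `B`, and sends the realizations in `B` of the
quantifier-free `L`-type of each tuple in `P` to tuples with a common quantifier-free `L'`-type. -/
def QfHomogeneousOn (L L' : FirstOrder.Language) {M : Type*} [L.Structure M] [L'.Structure M]
    (B : Set M) (P : Set (Σ n, Fin n → M)) (g : M → M) : Prop :=
  QfPreservingOn L B g ∧ ∀ a ∈ P, ∀ x y : Fin a.1 → M, (∀ i, x i ∈ B) → (∀ i, y i ∈ B) →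
    SameQfType L M x a.2 → SameQfType L M y a.2 → SameQfType L' M (g ∘ x) (g ∘ y)

theorem QfHomogeneousOn.mono {B B' : Set M} {P P' : Set (Σ n, Fin n → M)} {g : M → M}
    (h : QfHomogeneousOn L L' B P g) (hB : B' ⊆ B) (hP : P' ⊆ P) :
    QfHomogeneousOn L L' B' P' g :=
  ⟨fun n x hx => h.1 n x fun i => hB (hx i), fun a ha x y hx hy =>
    h.2 a (hP ha) x y (fun i => hB (hx i)) fun i => hB (hy i)⟩

theorem exists_qfHomogeneousOn_univ (hsat : IsSaturatedStructure L' M)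
    (hreduct : ∀ (n : ℕ) (x y : Fin n → M), SameQfType L' M x y → SameQfType L M x y)
    (hqe : ∀ (n : ℕ) (b : Fin n → M), ∃ φ : L'.Formula (Fin n),
      ∀ c : Fin n → M, Formula.Realize φ c ↔ SameQfType L' M c b)
    (P : Set (Σ n, Fin n → M))
    (hP : ∀ B : Set M, B.Finite → ∀ P₀ ⊆ P, P₀.Finite → ∃ g, QfHomogeneousOn L L' B P₀ g) :
    ∃ g, QfHomogeneousOn L L' Set.univ P g := by
  choose φ hφ using hqe
  let Γ₁ : Set (L'.Formula M) := {θ | ∃ (n : ℕ) (x b : Fin n → M), ¬ SameQfType L M b x ∧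
    θ = ((φ n b).relabel x).not}
  let Γ₂ : Set (L'.Formula M) := {θ | ∃ a ∈ P, ∃ x y : Fin a.1 → M, SameQfType L M x a.2 ∧
    SameQfType L M y a.2 ∧ ∃ ψ : L'.Formula (Fin a.1), ψ.IsQF ∧
      θ = (ψ.relabel x).iff (ψ.relabel y)}
  have hsupp : ∀ θ ∈ Γ₁ ∪ Γ₂, ∃ (B : Set M) (P₀ : Set (Σ n, Fin n → M)), B.Finite ∧
      P₀ ⊆ P ∧ P₀.Finite ∧ ∀ g, QfHomogeneousOn L L' B P₀ g → θ.Realize g := by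
    rintro θ (⟨n, x, b, hbx, rfl⟩ | ⟨a, ha, x, y, hx, hy, ψ, hψ, rfl⟩)
    · refine ⟨Set.range x, ∅, Set.finite_range x, Set.empty_subset _, Set.finite_empty,
        fun g hg => ?_⟩
      rw [Formula.realize_not, Formula.realize_relabel, hφ]
      exact fun hgb => hbx ((hreduct _ _ _ hgb).symm.trans
        (hg.1 n x fun i => Set.mem_range_self i).symm)
    · refine ⟨Set.range x ∪ Set.range y, {a}, (Set.finite_range x).union (Set.finite_range y),
        Set.singleton_subset_iff.2 ha, Set.finite_singleton a, fun g hg => ?_⟩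
      rw [Formula.realize_iff, Formula.realize_relabel, Formula.realize_relabel]
      exact hg.2 a rfl x y (fun i => Or.inl (Set.mem_range_self i))
        (fun i => Or.inr (Set.mem_range_self i)) hx hy ψ hψ
  choose! B P₀ hB hPP hP₀ hreal using hsupp
  obtain ⟨g, hg⟩ := hsat.exists_realize (Γ₁ ∪ Γ₂) (by
    intro Γ₀ hΓ₀
    obtain ⟨g, hg⟩ := hP (⋃ θ ∈ Γ₀, B θ) (Γ₀.finite_toSet.biUnion fun θ hθ => hB θ (hΓ₀ hθ))
      (⋃ θ ∈ Γ₀, P₀ θ) (Set.iUnion₂_subset fun θ hθ => hPP θ (hΓ₀ hθ))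
      (Γ₀.finite_toSet.biUnion fun θ hθ => hP₀ θ (hΓ₀ hθ))
    exact ⟨g, fun θ hθ => hreal θ (hΓ₀ hθ) g
      (hg.mono (Set.subset_biUnion_of_mem hθ) (Set.subset_biUnion_of_mem hθ))⟩)
  refine ⟨g, fun n x _ => ?_, fun a ha x y _ _ hx hy ψ hψ => ?_⟩
  · by_contra hcon
    have := hg _ (Or.inl ⟨n, x, g ∘ x, fun h => hcon h.symm, rfl⟩)
    rw [Formula.realize_not, Formula.realize_relabel, hφ] at this
    exact this (SameQfType.refl _)
  · have := hg _ (Or.inr ⟨a, ha, x, y, hx, hy, ψ, hψ, rfl⟩)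
    rwa [Formula.realize_iff, Formula.realize_relabel, Formula.realize_relabel] at this

theorem exists_finset_sameQfType (hsat : IsSaturatedStructure L' M)
    (hqe : ∀ (n : ℕ) (b : Fin n → M), ∃ φ : L'.Formula (Fin n),
      ∀ c : Fin n → M, Formula.Realize φ c ↔ SameQfType L' M c b) (n : ℕ) :
    ∃ t : Finset (Fin n → M), ∀ x, ∃ b ∈ t, SameQfType L' M x b := by
  classical
  cases finite_or_infinite M
  · have := Fintype.ofFinite (Fin n → M)
    exact ⟨Finset.univ, fun x => ⟨x, Finset.mem_univ x, SameQfType.refl x⟩⟩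
  by_contra! hcon
  choose φ hφ using hqe n
  have e : Fin n ↪ M := (Fin.valEmbedding).trans (Infinite.natEmbedding M)
  obtain ⟨v, hv⟩ := hsat.exists_realize (Set.range fun b => ((φ b).relabel e).not) (by
    intro Γ₀ hΓ₀
    rw [← Set.image_univ] at hΓ₀
    obtain ⟨t, -, rfl⟩ := Finset.subset_set_image_iff.1 hΓ₀
    obtain ⟨x, hx⟩ := hcon t
    refine ⟨Function.extend e x id, ?_⟩
    simp only [Finset.mem_image, forall_exists_index, and_imp, forall_apply_eq_imp_iff₂,
      Formula.realize_not, Formula.realize_relabel, hφ]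
    rwa [show Function.extend e x id ∘ e = x from funext (e.injective.extend_apply x id)])
  have := hv _ ⟨v ∘ e, rfl⟩
  rw [Formula.realize_not, Formula.realize_relabel, hφ] at this
  exact this (SameQfType.refl _)

theorem exists_coloring_sameQfType (hsat : IsSaturatedStructure L' M)
    (hqe : ∀ (n : ℕ) (b : Fin n → M), ∃ φ : L'.Formula (Fin n),
      ∀ c : Fin n → M, Formula.Realize φ c ↔ SameQfType L' M c b) (n : ℕ) :
    ∃ r, 2 ≤ r ∧ ∃ κ : (Fin n → M) → Fin r, ∀ x y, κ x = κ y → SameQfType L' M x y := by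
  obtain ⟨t, ht⟩ := exists_finset_sameQfType hsat hqe n
  choose b hb hxb using ht
  refine ⟨t.card + 2, by omega, fun x => (t.equivFin ⟨b x, hb x⟩).castAdd 2, fun x y hxy => ?_⟩
  have : b x = b y := by simpa using hxy
  exact (hxb x).trans (this ▸ (hxb y).symm)

theorem TupleRamsey.exists_isSemiRetraction (hRP : TupleRamsey L M)
    (hsat : IsSaturatedStructure L' M)
    (hreduct : ∀ (n : ℕ) (x y : Fin n → M), SameQfType L' M x y → SameQfType L M x y)
    (hqe : ∀ (n : ℕ) (b : Fin n → M), ∃ φ : L'.Formula (Fin n),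
      ∀ c : Fin n → M, Formula.Realize φ c ↔ SameQfType L' M c b) :
    ∃ g f : M → M, IsSemiRetraction L L' M M g f := by
  have hfin : ∀ P : Set (Σ n, Fin n → M), P.Finite → ∃ g, QfHomogeneousOn L L' Set.univ P g := by
    intro P hP
    induction P, hP using Set.Finite.induction_on with
    | empty => exact ⟨id, fun n x _ => SameQfType.refl x, by simp⟩
    | @insert a s _ _ ih =>
      obtain ⟨g, hgpres, hg⟩ := ih
      refine exists_qfHomogeneousOn_univ hsat hreduct hqe _ fun B hB P₀ hP₀ _ => ?_
      obtain ⟨r, hr, κ, hκ⟩ := exists_coloring_sameQfType hsat hqe a.1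
      obtain ⟨h, hhpres, hh⟩ := hRP a.1 a.2 B hB r hr fun x => κ (g ∘ x)
      refine ⟨g ∘ h, QfHomogeneousOn.mono ⟨hgpres.comp hhpres (Set.mapsTo_univ _ _), ?_⟩
        subset_rfl hP₀⟩
      rintro a' (rfl | ha') x y hxB hyB hx hy
      · exact hκ _ _ (hh x y hxB hyB hx hy)
      · exact hg a' ha' _ _ (fun _ => Set.mem_univ _) (fun _ => Set.mem_univ _)
          ((hhpres _ x hxB).symm.trans hx) ((hhpres _ y hyB).symm.trans hy)
  obtain ⟨g, hgpres, hg⟩ := exists_qfHomogeneousOn_univ hsat hreduct hqe Set.univ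
    fun B _ P₀ _ hP₀ => (hfin P₀ hP₀).imp fun g hg => hg.mono (Set.subset_univ B) subset_rfl
  refine ⟨g, id, ⟨fun x y hxy => ?_, fun n x y hxy => ?_⟩, ⟨Function.injective_id, hreduct⟩,
    fun n x => hgpres n x fun _ => Set.mem_univ _⟩
  · have := (hgpres 2 ![x, y] fun _ => Set.mem_univ _).realize_term_eq_iff
      (Term.var 0) (Term.var 1)
    simpa using this.2 (by simpa using hxy)
  · exact hg ⟨n, x⟩ (Set.mem_univ _) x y (fun _ => Set.mem_univ _) (fun _ => Set.mem_univ _)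
      (SameQfType.refl x) hxy.symm

end QfReduct

/-- Theorem 3.6 / `iff`: let `𝒜` and `ℬ` be locally finite ordered structures
on the same underlying set such that `𝒜` is a quantifier-free reduct of `ℬ`, `ℬ` is saturated,
every quantifier-free type realized in `ℬ` is equivalent in `ℬ` to a single formula, and `ℬ`
has the Ramsey property.  Then `𝒜` is a semi-retract of `ℬ` if and only if `𝒜` has the Ramsey
property. -/
theorem semiRetract_iff_RP_of_qf_reduct
    {L L' : FirstOrder.Language} {M : Type*} [L.Structure M] [L'.Structure M]
    (hlfA : StructLocallyFinite L M) (hlfB : StructLocallyFinite L' M)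
    (hordA : ∃ R : L.Relations 2, IsLinearOrder M fun x y => Structure.RelMap R ![x, y])
    (hordB : ∃ R : L'.Relations 2, IsLinearOrder M fun x y => Structure.RelMap R ![x, y])
    -- (i) `𝒜` is a quantifier-free reduct of `ℬ`
    (hreduct : ∀ (n : ℕ) (x y : Fin n → M), SameQfType L' M x y → SameQfType L M x y)
    -- (ii) `ℬ` is saturated
    (hsat : ∀ S : Set M, Cardinal.mk S < Cardinal.mk M →
      ∀ p : Set (L'.Formula (S ⊕ Fin 1)),
        (∀ p₀ : Finset (L'.Formula (S ⊕ Fin 1)), ↑p₀ ⊆ p →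
          ∃ b : M, ∀ φ ∈ p₀, Formula.Realize φ (Sum.elim (fun s => (s : M)) fun _ => b)) →
        ∃ b : M, ∀ φ ∈ p, Formula.Realize φ (Sum.elim (fun s => (s : M)) fun _ => b))
    -- (iii) every quantifier-free type realized in `ℬ` is equivalent in `ℬ` to a formula
    (hqe : ∀ (n : ℕ) (b : Fin n → M), ∃ φ : L'.Formula (Fin n),
      ∀ c : Fin n → M, Formula.Realize φ c ↔ SameQfType L' M c b)
    -- (iv) `ℬ` has the Ramsey property
    (hRPB : ∀ A₀ B₀ : L'.Substructure M, (A₀ : Set M).Finite → (B₀ : Set M).Finite →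
      ∀ r : ℕ, 2 ≤ r → ArrowSub L' M A₀ B₀ r 1) :
    (∃ g f : M → M, IsSemiRetraction L L' M M g f) ↔
      ∀ A B : L.Substructure M, (A : Set M).Finite → (B : Set M).Finite → ∀ r : ℕ, 2 ≤ r →
        ArrowSub L M A B r 1 := by
  constructor
  · rintro ⟨g, f, hgf⟩
    exact arrowSub_of_tupleRamsey
      ((tupleRamsey_of_arrowSub hlfB hordB hRPB).of_isSemiRetraction hgf)
  · intro hRPA
    exact (tupleRamsey_of_arrowSub hlfA hordA hRPA).exists_isSemiRetraction hsat hreduct hqe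
end

section
/- Fix an integer n ≥ 2. Let B be a countable atomless Boolean algebra, regarded as a structure in the language L_BA having binary function symbols for join and meet, a unary function symbol for complement, and constant symbols for 0 and 1. Let H be a countable structure in the language with a single n-ary relation symbol E such that: E holds only on n-tuples of pairwise distinct elements; E is invariant under all permutations of its arguments; and H has the hypergraph extension property: for every finite set X of elements of H and every collection S of (n−1)-element subsets of X there is an element v ∉ X such that for every (n−1)-element subset s of X, E holds of v together with (any enumeration of) s if and only if s ∈ S (so H is the countable random n-regular hypergraph). Then H is a semi-retract of B: there exist qftp-respecting injections g : H → B and f : B → H such that f ∘ g is an embedding of H into H in the hypergraph language. -/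
open FirstOrder FirstOrder.Language

/-- Function symbols of the language of Boolean algebras: constants `0`, `1`, unary
complementation, and binary join and meet. -/
inductive BAFunc : ℕ → Type
  | bot : BAFunc 0
  | top : BAFunc 0
  | compl : BAFunc 1
  | sup : BAFunc 2
  | inf : BAFunc 2

/-- The first-order language of Boolean algebras. -/
def LBA : FirstOrder.Language :=
  ⟨BAFunc, fun _ => Empty⟩

/-- The natural `LBA`-structure on a Boolean algebra. -/
def baStructure (B : Type*) [BooleanAlgebra B] : LBA.Structure B where
  funMap {n} f x :=
    match f, x with
    | .bot, _ => ⊥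
    | .top, _ => ⊤
    | .compl, x => (x 0)ᶜ
    | .sup, x => x 0 ⊔ x 1
    | .inf, x => x 0 ⊓ x 1
  RelMap {n} r _ := r.elim

/-- The relation symbols of the language with a single `n`-ary relation symbol. -/
inductive HypRel (n : ℕ) : ℕ → Type
  | e : HypRel n n

/-- The language with a single `n`-ary relation symbol. -/
def LHyp (n : ℕ) : FirstOrder.Language :=
  ⟨fun _ => Empty, HypRel n⟩

/-- The `LHyp n`-structure on `H` determined by an `n`-ary relation `E`. -/
def hypStructure (n : ℕ) (H : Type*) (E : (Fin n → H) → Prop) : (LHyp n).Structure H where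
  funMap {m} f _ := f.elim
  RelMap {m} r x := match r with | .e => E x

namespace RandomHypergraph

/-! ### Quantifier-free types -/

section QuantifierFree

variable {L : FirstOrder.Language} {M : Type*} [L.Structure M] {m : ℕ} {x y : Fin m → M}

theorem sameQfType_of_atomic
    (heq : ∀ t u : L.Term (Fin m), t.realize x = u.realize x ↔ t.realize y = u.realize y)
    (hrel : ∀ (l : ℕ) (R : L.Relations l) (ts : Fin l → L.Term (Fin m)),
      Structure.RelMap R (fun i => (ts i).realize x) ↔
        Structure.RelMap R (fun i => (ts i).realize y)) :
    SameQfType L M x y := by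
  have key : ∀ (z : Fin m → M) (t : L.Term (Fin m ⊕ Fin 0)),
      t.realize (Sum.elim z default) = (t.relabel (Sum.elim id finZeroElim)).realize z := by
    intro z t
    rw [Term.realize_relabel]
    congr 1
    funext i
    rcases i with i | i
    · rfl
    · exact i.elim0
  intro φ hφ
  unfold Formula.Realize
  induction hφ with
  | falsum => exact Iff.rfl
  | of_isAtomic h =>
    cases h with
    | equal t u => simpa only [BoundedFormula.realize_bdEqual, key] using heq _ _
    | rel R ts => simpa only [BoundedFormula.realize_rel, key] using hrel _ R _
  | imp _ _ ih₁ ih₂ =>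
    rw [BoundedFormula.realize_imp, BoundedFormula.realize_imp, ih₁, ih₂]

theorem SameQfType.realize_eq_iff (h : SameQfType L M x y) (t u : L.Term (Fin m)) :
    t.realize x = u.realize x ↔ t.realize y = u.realize y := by
  simpa only [Formula.realize_equal] using
    h (t.equal u) (BoundedFormula.IsAtomic.equal _ _).isQF

theorem SameQfType.relMap_iff (h : SameQfType L M x y) {l : ℕ} (R : L.Relations l)
    (ts : Fin l → L.Term (Fin m)) :
    Structure.RelMap R (fun i => (ts i).realize x) ↔
      Structure.RelMap R (fun i => (ts i).realize y) := by
  simpa only [Formula.realize_rel] using h (R.formula ts) (BoundedFormula.IsAtomic.rel _ _).isQF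

end QuantifierFree

theorem sameQfType_hyp_iff {n : ℕ} {H : Type*} (E : (Fin n → H) → Prop) {m : ℕ}
    (x y : Fin m → H) :
    @SameQfType (LHyp n) H (hypStructure n H E) m x y ↔
      (∀ i j, x i = x j ↔ y i = y j) ∧ ∀ σ : Fin n → Fin m, E (x ∘ σ) ↔ E (y ∘ σ) := by
  let := hypStructure n H E
  constructor
  · intro h
    exact ⟨fun i j => SameQfType.realize_eq_iff h (Term.var i) (Term.var j),
      fun σ => SameQfType.relMap_iff h (HypRel.e : (LHyp n).Relations n)
        (fun i => Term.var (σ i))⟩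
  · rintro ⟨heq, hrel⟩
    have hvar : ∀ t : (LHyp n).Term (Fin m), ∃ i, t = Term.var i := by
      rintro (i | ⟨f, _⟩)
      · exact ⟨i, rfl⟩
      · exact f.elim
    refine sameQfType_of_atomic (fun t u => ?_) fun l R ts => ?_
    · obtain ⟨i, rfl⟩ := hvar t
      obtain ⟨j, rfl⟩ := hvar u
      exact heq i j
    · choose σ hσ using fun i => hvar (ts i)
      obtain rfl : ts = fun i => Term.var (σ i) := funext hσ
      cases R
      exact hrel σ

section BooleanAlgebra

variable {B : Type*} [BooleanAlgebra B]

/-- The literal `b` or `bᶜ`, according to a truth value. -/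
def literal (p : Bool) (b : B) : B := if p then b else bᶜ

theorem le_literal_realize {α : Type*} (I : α → Bool) (a : α → B) (w : B)
    (h : ∀ i, w ≤ literal (I i) (a i)) (t : LBA.Term α) :
    w ≤ literal (@Term.realize LBA Bool (baStructure Bool) α I t)
      (@Term.realize LBA B (baStructure B) α a t) := by
  let := baStructure B
  let := baStructure Bool
  induction t with
  | var i => exact h i
  | func f ts ih =>
    cases f with
    | bot =>
      change w ≤ literal ⊥ ⊥
      simp [literal]
    | top =>
      change w ≤ literal ⊤ ⊤
      simp [literal]
    | compl =>
      have h0 := ih 0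
      change w ≤ literal ((ts 0).realize I)ᶜ ((ts 0).realize a)ᶜ
      revert h0
      cases (ts 0).realize I <;> simp [literal]
    | sup =>
      have h0 := ih 0
      have h1 := ih 1
      change w ≤ literal ((ts 0).realize I ⊔ (ts 1).realize I) ((ts 0).realize a ⊔ (ts 1).realize a)
      revert h0 h1
      cases (ts 0).realize I <;> cases (ts 1).realize I <;>
        simp +contextual [literal, le_sup_of_le_left, le_sup_of_le_right]
    | inf =>
      have h0 := ih 0
      have h1 := ih 1
      change w ≤ literal ((ts 0).realize I ⊓ (ts 1).realize I) ((ts 0).realize a ⊓ (ts 1).realize a)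
      revert h0 h1
      cases (ts 0).realize I <;> cases (ts 1).realize I <;>
        simp +contextual [literal, le_sup_of_le_left, le_sup_of_le_right]

theorem exists_inf_literal_ne_bot {α : Type*} [DecidableEq α] (a : α → B) (s : Finset α)
    {z : B} (hz : z ≠ ⊥) :
    ∃ I : α → Bool, z ⊓ s.inf (fun i => literal (I i) (a i)) ≠ ⊥ := by
  induction s using Finset.induction_on with
  | empty => exact ⟨fun _ => true, by simpa using hz⟩
  | insert j s hj ih =>
    obtain ⟨I, hI⟩ := ih
    have hsplit : ∃ p : Bool,
        (z ⊓ s.inf (fun i => literal (I i) (a i))) ⊓ literal p (a j) ≠ ⊥ := by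
      by_contra! hp
      have h₁ := hp true
      have h₂ := hp false
      simp only [literal, if_true, Bool.false_eq_true, if_false] at h₁ h₂
      apply hI
      rw [← inf_top_eq (z ⊓ _), ← sup_compl_eq_top (x := a j), inf_sup_left]
      exact sup_eq_bot_iff.2 ⟨h₁, h₂⟩
    obtain ⟨p, hp⟩ := hsplit
    refine ⟨Function.update I j p, ?_⟩
    rw [Finset.inf_insert, Function.update_self, Finset.inf_congr rfl
      (g := fun i => literal (I i) (a i))]
    · rwa [inf_left_comm, inf_comm]
    · intro i hi
      rw [Function.update_of_ne (ne_of_mem_of_not_mem hi hj)]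

theorem sameQfType_ba_of_literals {m : ℕ} (a b : Fin m → B)
    (h : ∀ I : Fin m → Bool, Finset.univ.inf (fun i => literal (I i) (a i)) = ⊥ ↔
      Finset.univ.inf (fun i => literal (I i) (b i)) = ⊥) :
    @SameQfType LBA B (baStructure B) m a b := by
  let := baStructure B
  let := baStructure Bool
  have main : ∀ a b : Fin m → B, (∀ I : Fin m → Bool,
      Finset.univ.inf (fun i => literal (I i) (b i)) = ⊥ →
      Finset.univ.inf (fun i => literal (I i) (a i)) = ⊥) →
      ∀ t u : LBA.Term (Fin m), t.realize b = u.realize b → t.realize a = u.realize a := by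
    intro a b h t u hb
    by_contra hne
    obtain ⟨I, hI⟩ := exists_inf_literal_ne_bot a Finset.univ
      (z := symmDiff (t.realize a) (u.realize a)) (by simpa [symmDiff_eq_bot] using hne)
    have hlit : ∀ (c : Fin m → B) (v : LBA.Term (Fin m)), Finset.univ.inf
        (fun i => literal (I i) (c i)) ≤ literal (v.realize I) (v.realize c) := fun c v =>
      le_literal_realize I c _ (fun i => Finset.inf_le (Finset.mem_univ i)) v
    by_cases htu : t.realize I = u.realize I
    · have ht := hlit a t
      have hu := hlit a u
      rw [htu] at ht
      apply hI
      rw [← disjoint_iff]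
      cases hv : u.realize I
      · rw [hv] at ht hu
        simp only [literal, Bool.false_eq_true, if_false] at ht hu
        exact Disjoint.mono_left symmDiff_le_sup
          (Disjoint.sup_left (le_compl_iff_disjoint_left.1 ht) (le_compl_iff_disjoint_left.1 hu))
      · rw [hv] at ht hu
        simp only [literal, if_true] at ht hu
        exact disjoint_symmDiff_inf _ _ |>.mono_right (le_inf ht hu)
    · have ht := hlit b t
      have hu := hlit b u
      have hbot : Finset.univ.inf (fun i => literal (I i) (b i)) = ⊥ := by
        rw [hb] at ht
        have hle := le_inf ht hu
        refine le_bot_iff.1 (hle.trans ?_)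
        revert htu
        cases t.realize I <;> cases u.realize I <;> simp [literal]
      apply hI
      rw [h I hbot, inf_bot_eq]
  exact sameQfType_of_atomic
    (fun t u => ⟨main b a (fun I => (h I).1) t u, main a b (fun I => (h I).2) t u⟩)
    fun l R => R.elim

theorem SameQfType.inf_eq_bot_iff {m : ℕ} {a b : Fin m → B}
    (h : @SameQfType LBA B (baStructure B) m a b) (s : Finset (Fin m)) :
    s.inf a = ⊥ ↔ s.inf b = ⊥ := by
  let := baStructure B
  have hterm : ∃ t : LBA.Term (Fin m), ∀ c : Fin m → B, t.realize c = s.inf c := by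
    induction s using Finset.induction_on with
    | empty => exact ⟨Term.func (BAFunc.top : LBA.Functions 0) Fin.elim0, fun c => rfl⟩
    | insert j s _ ih =>
      obtain ⟨t, ht⟩ := ih
      refine ⟨Term.func (BAFunc.inf : LBA.Functions 2) ![Term.var j, t], fun c => ?_⟩
      rw [Finset.inf_insert, ← ht]
      rfl
  obtain ⟨t, ht⟩ := hterm
  have := SameQfType.realize_eq_iff h t (Term.func (BAFunc.bot : LBA.Functions 0) Fin.elim0)
  rw [ht, ht] at this
  exact this

end BooleanAlgebra

/-! ### Recursive constructions -/

/-- Recursion along `ℕ` where each value is computed from a sequence agreeing with the one under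
construction at all earlier places. -/
theorem exists_seq_of_forall_exists_next {α : Type*} [Nonempty α] (P : ℕ → (ℕ → α) → α → Prop)
    (hP : ∀ k c, ∃ v, P k c v) :
    ∃ c : ℕ → α, ∀ k, ∃ c' : ℕ → α, (∀ i < k, c' i = c i) ∧ P k c' (c k) := by
  classical
  choose F hF using hP
  let d : α := Classical.arbitrary α
  let c : ℕ → α := WellFounded.fix (C := fun _ => α) Nat.lt_wfRel.wf
    (fun k ih => F k (fun i => if h : i < k then ih i h else d))
  have hc : ∀ k, c k = F k (fun i => if i < k then c i else d) := fun k => by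
    have := WellFounded.fix_eq (C := fun _ => α) Nat.lt_wfRel.wf
      (fun k ih => F k (fun i => if h : i < k then ih i h else d)) k
    simpa only [dite_eq_ite] using this
  refine ⟨c, fun k => ⟨fun i => if i < k then c i else d, fun i hi => if_pos hi, ?_⟩⟩
  conv_rhs => rw [hc k]
  exact hF _ _

/-- Given a hereditary notion of independence, an atomless Boolean algebra contains a sequence
whose only relations are that dependent finite sets have meet `⊥`. -/
theorem exists_seq_inf_eq_bot_iff {B : Type*} [BooleanAlgebra B] [Nontrivial B]
    (hatomless : ∀ a : B, ⊥ < a → ∃ b : B, ⊥ < b ∧ b < a)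
    (Dep : Finset ℕ → Prop) (hmono : ∀ I J, I ⊆ J → Dep I → Dep J) (hempty : ¬ Dep ∅) :
    ∃ c : ℕ → B, (∀ I, Dep I → I.inf c = ⊥) ∧
      ∀ I J, ¬ Dep I → Disjoint I J → I.inf c ⊓ J.inf (fun i => (c i)ᶜ) ≠ ⊥ := by
  classical
  have hsplit : ∀ a : B, ∃ b : B, b ≤ a ∧ (a ≠ ⊥ → b ≠ ⊥ ∧ a ⊓ bᶜ ≠ ⊥) := by
    intro a
    by_cases ha : a = ⊥
    · exact ⟨⊥, bot_le, fun h => (h ha).elim⟩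
    · obtain ⟨b, hb, hba⟩ := hatomless a (bot_lt_iff_ne_bot.2 ha)
      refine ⟨b, hba.le, fun _ => ⟨hb.ne', fun h => hba.not_ge ?_⟩⟩
      exact (disjoint_compl_right_iff (y := b)).1 (disjoint_iff.2 h)
  choose half half_le half_spec using hsplit
  let cell : (ℕ → B) → ℕ → Finset ℕ → B := fun c k I =>
    I.inf c ⊓ (Finset.range k \ I).inf (fun i => (c i)ᶜ)
  obtain ⟨c, hc⟩ := exists_seq_of_forall_exists_next (α := B)
    (fun k c v => v = ((Finset.range k).powerset.filter (fun I => ¬ Dep (insert k I))).sup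
      (fun I => half (cell c k I))) (fun _ _ => ⟨_, rfl⟩)
  replace hc : ∀ k, c k = ((Finset.range k).powerset.filter (fun I => ¬ Dep (insert k I))).sup
      (fun I => half (cell c k I)) := by
    intro k
    obtain ⟨c', hc', h⟩ := hc k
    rw [h]
    refine Finset.sup_congr rfl fun I hI => ?_
    have hIk := Finset.mem_powerset.1 (Finset.mem_filter.1 hI).1
    simp only [cell]
    congr 2
    · exact Finset.inf_congr rfl fun i hi => hc' i (Finset.mem_range.1 (hIk hi))
    · refine Finset.inf_congr rfl fun i hi => ?_
      rw [hc' i (Finset.mem_range.1 (Finset.mem_sdiff.1 hi).1)]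
  have cell_disjoint : ∀ k I J, I ⊆ Finset.range k → J ⊆ Finset.range k → ¬ I ⊆ J →
      Disjoint (I.inf c) (cell c k J) := by
    intro k I J hI hJ hIJ
    obtain ⟨i, hiI, hiJ⟩ := Finset.not_subset.1 hIJ
    refine Disjoint.mono (Finset.inf_le hiI) (inf_le_right.trans (Finset.inf_le
      (Finset.mem_sdiff.2 ⟨hI hiI, hiJ⟩))) disjoint_compl_right
  have hdep : ∀ k I, I ⊆ Finset.range k → Dep (insert k I) → Disjoint (I.inf c) (c k) := by
    intro k I hI hD
    rw [hc k, Finset.disjoint_sup_right]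
    intro J hJ
    rw [Finset.mem_filter, Finset.mem_powerset] at hJ
    refine (cell_disjoint k I J hI hJ.1 fun hIJ => hJ.2 ?_).mono_right (half_le _)
    exact hmono _ _ (Finset.insert_subset_insert k hIJ) hD
  have hbot : ∀ k I, I ⊆ Finset.range k → Dep I → I.inf c = ⊥ := by
    intro k
    induction k with
    | zero =>
      intro I hI hD
      obtain rfl : I = ∅ := by simpa using hI
      exact (hempty hD).elim
    | succ k ih =>
      intro I hI hD
      rw [Finset.range_add_one] at hI
      by_cases hk : k ∈ I
      · have hsub : I.erase k ⊆ Finset.range k := Finset.subset_insert_iff.1 hI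
        have := hdep k (I.erase k) hsub (by rwa [Finset.insert_erase hk])
        rw [← Finset.insert_erase hk, Finset.inf_insert]
        exact disjoint_iff.1 this.symm
      · exact ih I ((Finset.subset_insert_iff_of_notMem hk).1 hI) hD
  have hcell : ∀ k I, I ⊆ Finset.range k → ¬ Dep I → cell c k I ≠ ⊥ := by
    intro k
    induction k with
    | zero =>
      intro I hI _
      obtain rfl : I = ∅ := by simpa using hI
      simp [cell]
    | succ k ih =>
      intro I hI hD
      rw [Finset.range_add_one] at hI
      by_cases hk : k ∈ I
      · have hsub : I.erase k ⊆ Finset.range k := Finset.subset_insert_iff.1 hI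
        have hne := ih _ hsub fun h => hD (hmono _ _ (Finset.erase_subset _ _) h)
        have hrange : Finset.range (k + 1) \ I = Finset.range k \ I.erase k := by
          ext i
          simp only [Finset.mem_sdiff, Finset.mem_range, Finset.mem_erase]
          grind
        have hle : half (cell c k (I.erase k)) ≤ cell c (k + 1) I := by
          have h₁ : half (cell c k (I.erase k)) ≤ c k := by
            rw [hc k]
            refine Finset.le_sup (f := fun I => half (cell c k I)) (Finset.mem_filter.2
              ⟨Finset.mem_powerset.2 hsub, ?_⟩)
            rwa [Finset.insert_erase hk]
          have h₂ := half_le (cell c k (I.erase k))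
          simp only [cell] at h₁ h₂ ⊢
          rw [hrange]
          conv_rhs => rw [← Finset.insert_erase hk, Finset.inf_insert, inf_assoc]
          rw [Finset.erase_insert (Finset.notMem_erase k I)]
          exact le_inf h₁ h₂
        exact fun h => (half_spec _ hne).1 (le_bot_iff.1 (h ▸ hle))
      · have hsub : I ⊆ Finset.range k := (Finset.subset_insert_iff_of_notMem hk).1 hI
        have hne := ih I hsub hD
        have hrange : Finset.range (k + 1) \ I = insert k (Finset.range k \ I) := by
          rw [Finset.range_add_one, Finset.insert_sdiff_of_notMem _ hk]
        have heq : cell c (k + 1) I = cell c k I ⊓ (c k)ᶜ := by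
          simp only [cell]
          rw [hrange, Finset.inf_insert, inf_left_comm, inf_comm]
        have hle : cell c k I ⊓ (half (cell c k I))ᶜ ≤ cell c k I ⊓ (c k)ᶜ := by
          refine le_inf inf_le_left (le_compl_iff_disjoint_right.2 ?_)
          rw [hc k, Finset.disjoint_sup_right]
          intro J hJ
          rw [Finset.mem_filter, Finset.mem_powerset] at hJ
          by_cases hIJ : I = J
          · subst hIJ
            exact disjoint_compl_left.mono_left inf_le_right
          · refine Disjoint.mono inf_le_left (half_le _) ?_
            by_cases hss : I ⊆ J
            · refine ((cell_disjoint k J I hJ.1 hsub fun h => hIJ (hss.antisymm h)).symm).mono_right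
                inf_le_left
            · exact (cell_disjoint k I J hsub hJ.1 hss).mono_left inf_le_left
        rw [heq]
        exact fun h => (half_spec _ hne).2 (le_bot_iff.1 (h ▸ hle))
  have hbound : ∀ I : Finset ℕ, ∃ k, I ⊆ Finset.range k := fun I =>
    I.exists_nat_subset_range
  refine ⟨c, fun I hI => ?_, fun I J hI hIJ h => ?_⟩
  · obtain ⟨k, hk⟩ := hbound I
    exact hbot k I hk hI
  · obtain ⟨k, hk⟩ := hbound (I ∪ J)
    refine hcell k I (Finset.union_subset_left hk) hI (le_bot_iff.1 (h ▸ ?_))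
    refine inf_le_inf_left _ (Finset.inf_mono fun j hj => Finset.mem_sdiff.2
      ⟨hk (Finset.mem_union_right _ hj), fun hjI => Finset.disjoint_left.1 hIJ hjI hj⟩)

/-- The extension property makes every hypergraph on `ℕ` embed. -/
theorem exists_hypergraph_embedding {n : ℕ} (hn : 1 ≤ n) {H : Type*} (E : (Fin n → H) → Prop)
    (hext : ∀ (X : Finset H) (S : Finset (Finset H)), (∀ s ∈ S, s ⊆ X ∧ s.card = n - 1) →
      ∃ v ∉ X, ∀ s : Finset H, s ⊆ X → s.card = n - 1 →
        ∀ x : Fin n → H, Function.Injective x →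
          Set.range x = insert v (s : Set H) → (E x ↔ s ∈ S))
    (Q : Finset ℕ → Prop) :
    ∃ v : ℕ → H, Function.Injective v ∧
      ∀ x : Fin n → ℕ, Function.Injective x → (E (v ∘ x) ↔ Q (Finset.univ.image x)) := by
  classical
  have : Nonempty H := by
    obtain ⟨v, -⟩ := hext ∅ ∅ (by simp)
    exact ⟨v⟩
  let X : (ℕ → H) → ℕ → Finset H := fun v k => (Finset.range k).image v
  let S : (ℕ → H) → ℕ → Finset (Finset H) := fun v k =>
    (((Finset.range k).powerset.filter (fun t => Q (insert k t))).image (Finset.image v)).filter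
      (fun s => s.card = n - 1)
  obtain ⟨v, hv⟩ := exists_seq_of_forall_exists_next (α := H)
    (fun k v w => w ∉ X v k ∧ ∀ s : Finset H, s ⊆ X v k → s.card = n - 1 →
        ∀ x : Fin n → H, Function.Injective x →
          Set.range x = insert w (s : Set H) → (E x ↔ s ∈ S v k)) (by
      intro k v
      refine hext _ _ fun s hs => ?_
      obtain ⟨hs, hcard⟩ := Finset.mem_filter.1 hs
      obtain ⟨t, ht, rfl⟩ := Finset.mem_image.1 hs
      exact ⟨Finset.image_subset_image (Finset.mem_powerset.1 (Finset.mem_filter.1 ht).1), hcard⟩)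
  have himage : ∀ k (v' : ℕ → H), (∀ i < k, v' i = v i) → ∀ t ⊆ Finset.range k,
      t.image v' = t.image v := fun k v' h t ht =>
    Finset.image_congr fun i hi => h i (Finset.mem_range.1 (ht hi))
  replace hv : ∀ k, v k ∉ X v k ∧ ∀ s : Finset H, s ⊆ X v k → s.card = n - 1 →
        ∀ x : Fin n → H, Function.Injective x →
          Set.range x = insert (v k) (s : Set H) → (E x ↔ s ∈ S v k) := by
    intro k
    obtain ⟨v', h, hv'⟩ := hv k
    have hX : X v' k = X v k := himage k v' h _ subset_rfl
    have hS : S v' k = S v k := by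
      simp only [S]
      congr 1
      refine Finset.image_congr fun t ht => himage k v' h t ?_
      exact Finset.mem_powerset.1 (Finset.mem_filter.1 ht).1
    rwa [hX, hS] at hv'
  have hne : ∀ i k, i < k → v i ≠ v k := fun i k hik h =>
    (hv k).1 (h ▸ Finset.mem_image_of_mem v (Finset.mem_range.2 hik))
  have hinj : Function.Injective v := by
    intro i j hij
    rcases lt_trichotomy i j with h | h | h
    · exact (hne i j h hij).elim
    · exact h
    · exact (hne j i h hij.symm).elim
  refine ⟨v, hinj, fun x hx => ?_⟩
  let T : Finset ℕ := Finset.univ.image x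
  have hT : T.Nonempty := ⟨x ⟨0, hn⟩, Finset.mem_image_of_mem x (Finset.mem_univ _)⟩
  have hcardT : T.card = n := by
    simp [T, Finset.card_image_of_injective _ hx]
  let k : ℕ := T.max' hT
  have hkT : k ∈ T := T.max'_mem hT
  have hsub : T.erase k ⊆ Finset.range k := fun i hi =>
    Finset.mem_range.2 (T.lt_max'_of_mem_erase_max' hT hi)
  have hcard : ((T.erase k).image v).card = n - 1 := by
    rw [Finset.card_image_of_injective _ hinj, Finset.card_erase_of_mem hkT, hcardT]
  rw [(hv k).2 ((T.erase k).image v) (Finset.image_subset_image hsub) hcard (v ∘ x)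
    (hinj.comp hx)]
  · simp only [S, Finset.mem_filter, hcard, and_true]
    rw [Finset.mem_image]
    constructor
    · rintro ⟨t, ht, h⟩
      obtain rfl := Finset.image_injective hinj h
      have := (Finset.mem_filter.1 ht).2
      rwa [Finset.insert_erase hkT] at this
    · intro h
      refine ⟨T.erase k, Finset.mem_filter.2 ⟨Finset.mem_powerset.2 hsub, ?_⟩, rfl⟩
      rwa [Finset.insert_erase hkT]
  · rw [← Finset.coe_insert, ← Finset.image_insert, Finset.insert_erase hkT, Set.range_comp]
    simp [T]

/-- A countable set of generators realizing the edges of a hypergraph as the `n`-element sets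
with meet `⊥`. -/
theorem exists_generators {n : ℕ} (hn : 2 ≤ n) {B : Type*} [BooleanAlgebra B] [Nontrivial B]
    (hatomless : ∀ a : B, ⊥ < a → ∃ b : B, ⊥ < b ∧ b < a)
    {H : Type*} [Countable H] (E : (Fin n → H) → Prop)
    (hinj : ∀ x : Fin n → H, E x → Function.Injective x) :
    ∃ g : H → B, Function.Injective g ∧ ∀ P N : Finset H,
      P.inf g ⊓ N.inf (fun h => (g h)ᶜ) = ⊥ ↔
        ¬ Disjoint P N ∨ ∃ x : Fin n → H, E x ∧ ∀ i, x i ∈ P := by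
  classical
  obtain ⟨e, he⟩ := exists_injective_nat H
  obtain ⟨c, hdep, hindep⟩ := exists_seq_inf_eq_bot_iff hatomless
    (fun I => ∃ x : Fin n → H, E x ∧ ∀ i, e (x i) ∈ I)
    (fun I J hIJ ⟨x, hx, h⟩ => ⟨x, hx, fun i => hIJ (h i)⟩)
    (fun ⟨x, _, h⟩ => absurd (h ⟨0, by omega⟩) (Finset.notMem_empty _))
  have hmem : ∀ (h : H) (P : Finset H), e h ∈ P.image e ↔ h ∈ P := fun h P =>
    he.mem_finset_image
  have main : ∀ P N : Finset H,
      P.inf (c ∘ e) ⊓ N.inf (fun h => (c (e h))ᶜ) = ⊥ ↔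
        ¬ Disjoint P N ∨ ∃ x : Fin n → H, E x ∧ ∀ i, x i ∈ P := by
    intro P N
    constructor
    · intro h
      by_contra! hcon
      refine hindep (P.image e) (N.image e) ?_ ((Finset.disjoint_image he).2 hcon.1) ?_
      · rintro ⟨x, hx, h⟩
        obtain ⟨i, hi⟩ := hcon.2 x hx
        exact hi ((hmem _ _).1 (h i))
      · rw [Finset.inf_image, Finset.inf_image]
        exact h
    · rintro (h | ⟨x, hx, h⟩)
      · obtain ⟨a, haP, haN⟩ := Finset.not_disjoint_iff.1 h
        rw [← disjoint_iff]
        exact disjoint_compl_right.mono (Finset.inf_le (f := c ∘ e) haP)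
          (Finset.inf_le (f := fun h => (c (e h))ᶜ) haN)
      · have := hdep (P.image e) ⟨x, hx, fun i => (hmem _ _).2 (h i)⟩
        rw [Finset.inf_image] at this
        rw [this, bot_inf_eq]
  refine ⟨c ∘ e, fun a b hab => ?_, main⟩
  by_contra hne
  have hbot := (main {a} {b}).1 (by
    simp only [Finset.inf_singleton]
    rw [hab]
    exact inf_compl_self _)
  rcases hbot with h | ⟨x, hx, h⟩
  · exact h (by simpa using hne)
  · have h01 := hinj x hx (a₁ := ⟨0, by omega⟩) (a₂ := ⟨1, by omega⟩)
      ((Finset.mem_singleton.1 (h _)).trans (Finset.mem_singleton.1 (h _)).symm)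
    simp at h01

end RandomHypergraph

/-- Theorem 4.3: for every `n ≥ 2`, the countable random `n`-regular
hypergraph is a semi-retract of the countable atomless Boolean algebra. -/
theorem randomHypergraph_semiRetract_of_atomless_BA
    (n : ℕ) (hn : 2 ≤ n)
    (B : Type*) [BooleanAlgebra B] [Countable B] [Nontrivial B]
    (hatomless : ∀ a : B, ⊥ < a → ∃ b : B, ⊥ < b ∧ b < a)
    (H : Type*) [Countable H] (E : (Fin n → H) → Prop)
    -- `E` holds only on tuples of pairwise distinct elements
    (hinj : ∀ x : Fin n → H, E x → Function.Injective x)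
    -- `E` is invariant under permutations of its arguments
    (hperm : ∀ (x : Fin n → H) (σ : Equiv.Perm (Fin n)), E (x ∘ σ) ↔ E x)
    -- the hypergraph extension property
    (hext : ∀ (X : Finset H) (S : Finset (Finset H)), (∀ s ∈ S, s ⊆ X ∧ s.card = n - 1) →
      ∃ v ∉ X, ∀ s : Finset H, s ⊆ X → s.card = n - 1 →
        ∀ x : Fin n → H, Function.Injective x →
          Set.range x = insert v (s : Set H) → (E x ↔ s ∈ S)) :
    ∃ (g : H → B) (f : B → H),
      @IsSemiRetraction (LHyp n) LBA H B (hypStructure n H E) (baStructure B) g f := by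
  classical
  obtain ⟨g, hg, hgspec⟩ := RandomHypergraph.exists_generators hn hatomless E hinj
  obtain ⟨e, he⟩ := exists_injective_nat B
  obtain ⟨v, hv, hvspec⟩ := RandomHypergraph.exists_hypergraph_embedding (by omega) E hext
    (fun t => ∃ s : Finset B, s.image e = t ∧ s.inf id = ⊥)
  have hf : Function.Injective (v ∘ e) := hv.comp he
  have hfspec : ∀ b : Fin n → B,
      E ((v ∘ e) ∘ b) ↔ Function.Injective b ∧ Finset.univ.inf b = ⊥ := by
    intro b
    have hiff : Function.Injective b → (E ((v ∘ e) ∘ b) ↔ Finset.univ.inf b = ⊥) := by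
      intro hb
      rw [Function.comp_assoc, hvspec _ (he.comp hb), ← Finset.image_image]
      constructor
      · rintro ⟨s, hs, h⟩
        rw [Finset.image_injective he hs, Finset.inf_image] at h
        exact h
      · exact fun h => ⟨_, rfl, by rw [Finset.inf_image]; exact h⟩
    exact ⟨fun h => ⟨(hinj _ h).of_comp, (hiff (hinj _ h).of_comp).1 h⟩,
      fun h => (hiff h.1).2 h.2⟩
  have hfg : ∀ x : Fin n → H, E x ↔ E ((v ∘ e) ∘ g ∘ x) := by
    intro x
    have hinf : Finset.univ.inf (g ∘ x) =
        (Finset.univ.image x).inf g ⊓ (∅ : Finset H).inf (fun h => (g h)ᶜ) := by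
      rw [Finset.inf_image, Finset.inf_empty, inf_top_eq]
    rw [hfspec, hinf, hgspec]
    constructor
    · exact fun h => ⟨hg.comp (hinj x h), Or.inr ⟨x, h, fun i => by simp⟩⟩
    · rintro ⟨hgx, h | ⟨y, hy, h⟩⟩
      · exact (h (Finset.disjoint_empty_right _)).elim
      · choose σ hσ using fun i => Finset.mem_image.1 (h i)
        have hyx : y = x ∘ σ := funext fun i => (hσ i).2.symm
        have hσinj : Function.Injective σ := (hyx ▸ hinj y hy : Function.Injective (x ∘ σ)).of_comp
        rw [← hperm x (Equiv.ofBijective σ (Finite.injective_iff_bijective.1 hσinj))]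
        rw [hyx] at hy
        exact hy
  refine ⟨g, v ∘ e, ⟨hg, fun m x y hxy => ?_⟩, ⟨hf, fun m x y hxy => ?_⟩, fun m x => ?_⟩
  · rw [RandomHypergraph.sameQfType_hyp_iff] at hxy
    refine RandomHypergraph.sameQfType_ba_of_literals _ _ fun I => ?_
    have hlit : ∀ z : Fin m → H,
        Finset.univ.inf (fun i => RandomHypergraph.literal (I i) ((g ∘ z) i)) = ⊥ ↔
        (∃ i j, I i = true ∧ I j = false ∧ z i = z j) ∨
          ∃ σ : Fin n → Fin m, E (z ∘ σ) ∧ ∀ i, I (σ i) = true := by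
      intro z
      have hinf : Finset.univ.inf (fun i => RandomHypergraph.literal (I i) ((g ∘ z) i)) =
          ((Finset.univ.filter (fun i => I i = true)).image z).inf g ⊓
          ((Finset.univ.filter (fun i => ¬ I i = true)).image z).inf (fun h => (g h)ᶜ) := by
        rw [Finset.inf_image, Finset.inf_image]
        unfold RandomHypergraph.literal
        exact Finset.inf_ite ..
      rw [hinf, hgspec]
      refine or_congr ?_ ?_
      · rw [Finset.not_disjoint_iff]
        simp only [Finset.mem_image, Finset.mem_filter, Finset.mem_univ, true_and]
        constructor
        · rintro ⟨_, ⟨i, hi, rfl⟩, j, hj, h⟩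
          exact ⟨i, j, hi, by simpa using hj, h.symm⟩
        · rintro ⟨i, j, hi, hj, h⟩
          exact ⟨_, ⟨i, hi, rfl⟩, j, by simpa using hj, h.symm⟩
      · simp only [Finset.mem_image, Finset.mem_filter, Finset.mem_univ, true_and]
        constructor
        · rintro ⟨w, hw, h⟩
          choose σ hσ using h
          obtain rfl : z ∘ σ = w := funext fun i => (hσ i).2
          exact ⟨σ, hw, fun i => (hσ i).1⟩
        · rintro ⟨σ, hσ, h⟩
          exact ⟨_, hσ, fun i => ⟨σ i, h i, rfl⟩⟩
    simp only [hlit, hxy.1, hxy.2]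
  · have heq : ∀ i j, x i = x j ↔ y i = y j := fun i j =>
      @RandomHypergraph.SameQfType.realize_eq_iff LBA B (baStructure B) m x y hxy
        (Term.var i) (Term.var j)
    rw [RandomHypergraph.sameQfType_hyp_iff]
    refine ⟨fun i j => hf.eq_iff.trans ((heq i j).trans hf.eq_iff.symm), fun σ => ?_⟩
    refine (hfspec (x ∘ σ)).trans (Iff.trans ?_ (hfspec (y ∘ σ)).symm)
    refine and_congr ?_ ?_
    · simp only [Function.Injective, Function.comp_apply, heq]
    · simpa only [Finset.inf_image] using
        RandomHypergraph.SameQfType.inf_eq_bot_iff hxy (Finset.univ.image σ)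
  · rw [RandomHypergraph.sameQfType_hyp_iff]
    exact ⟨fun i j => (hf.comp hg).eq_iff.symm, fun σ => hfg (x ∘ σ)⟩
end
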